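/- arXiv:2307.16327 — 5 statements merged into one kernel-verified Lean document; each statement's English description precedes it below -/
import Mathlib

section
/- Let a be an effect on a finite-dimensional complex Hilbert space H and let K_1, …, K_n be operators with ∑_i K_i* K_i = a, representing an operation I measuring a with dual I*(b) = ∑_i K_i* b K_i. Then ∑_i K_i* a K_i = a if and only if ∑_i K_i* b K_i ≤ ∑_i K_i* a K_i for every effect b. -/
open scoped ComplexOrder Matrix

/-- An effect on the finite-dimensional complex Hilbert space `ℂ^n`:
an operator `a` with `0 ≤ a ≤ I` in the Loewner order. -/
def IsEffect {n : ℕ} (a : Matrix (Fin n) (Fin n) ℂ) : Prop :=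
  a.PosSemidef ∧ (1 - a).PosSemidef

/-- A state: a positive-semidefinite operator with trace 1. -/
def IsState {n : ℕ} (α : Matrix (Fin n) (Fin n) ℂ) : Prop :=
  α.PosSemidef ∧ α.trace = 1

/-- Theorem 3.1, (i) ⇔ (iv): for an operation `I` measuring `a = ∑ i, (K i)ᴴ * K i`,
`a` is repeatable with respect to `I` iff `I*(b) ≤ I*(a)` for every effect `b`. -/
theorem repeatable_iff_le {n m : ℕ}
    (a : Matrix (Fin n) (Fin n) ℂ) (ha : IsEffect a)
    (K : Fin m → Matrix (Fin n) (Fin n) ℂ)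
    (hK : ∑ i, (K i)ᴴ * K i = a) :
    (∑ i, (K i)ᴴ * a * K i = a) ↔
      (∀ b : Matrix (Fin n) (Fin n) ℂ, IsEffect b →
        ((∑ i, (K i)ᴴ * a * K i) - ∑ i, (K i)ᴴ * b * K i).PosSemidef) := by
  -- Since `I*(1) = a`, positivity of `I*(1 - b)` says `I*(b) ≤ a` for every effect `b`.
  have key : ∀ b : Matrix (Fin n) (Fin n) ℂ, IsEffect b →
      (a - ∑ i, (K i)ᴴ * b * K i).PosSemidef := by
    intro b hb
    have h : a - ∑ i, (K i)ᴴ * b * K i = ∑ i, (K i)ᴴ * (1 - b) * K i := by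
      rw [← hK, ← Finset.sum_sub_distrib]
      refine Finset.sum_congr rfl fun i _ => ?_
      rw [mul_sub, sub_mul, mul_one]
    rw [h]
    exact Matrix.posSemidef_sum _ fun i _ => hb.2.conjTranspose_mul_mul_same (K i)
  constructor
  · intro h b hb
    rw [h]
    exact key b hb
  · intro h
    -- The effect `b = 1` gives `a ≤ I*(a)`; antisymmetry of the Loewner order concludes.
    have h1 := h 1 ⟨Matrix.PosSemidef.one, by simpa using Matrix.PosSemidef.zero⟩
    simp only [mul_one, hK] at h1
    open scoped MatrixOrder in
    exact le_antisymm (Matrix.le_iff.2 (key a ha)) (Matrix.le_iff.2 h1)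
end

section
/- Let a be an effect on a finite-dimensional complex Hilbert space H and let K_1, …, K_n be operators with ∑_i K_i* K_i = a, representing an operation I(ρ) = ∑_i K_i ρ K_i* measuring a. Then ∑_i K_i* a K_i = a if and only if tr(I(I(ρ))) = tr(I(ρ)) for every state ρ. -/
/-!
Cyclicity of the trace turns `tr(I(σ))` into `tr(a σ)` and `tr(a I(ρ))` into `tr(I*(a) ρ)`
(`trace_kraus`), so the trace condition says that `M = I*(a) - a` satisfies `tr(M ρ) = 0` for every
state `ρ`. Testing this on the normalized rank-one states `x xᴴ / ‖x‖²` gives `⟨x, M x⟩ = 0` for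
all `x`, and over `ℂ` polarization forces `M = 0` (`eq_zero_of_trace_mul_state`).
-/

open scoped ComplexOrder Matrix

/-- Duality between the Schrödinger and Heisenberg pictures: `tr(b I(σ)) = tr(I*(b) σ)`. -/
lemma trace_kraus {n m : ℕ} (K : Fin m → Matrix (Fin n) (Fin n) ℂ)
    (b σ : Matrix (Fin n) (Fin n) ℂ) :
    (b * ∑ i, K i * σ * (K i)ᴴ).trace = ((∑ i, (K i)ᴴ * b * K i) * σ).trace := by
  simp only [Finset.mul_sum, Finset.sum_mul, Matrix.trace_sum]
  refine Finset.sum_congr rfl fun i _ => ?_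
  rw [← Matrix.mul_assoc, Matrix.trace_mul_comm]
  simp only [Matrix.mul_assoc]

/-- States separate matrices, including non-Hermitian ones. -/
lemma eq_zero_of_trace_mul_state {n : ℕ} (M : Matrix (Fin n) (Fin n) ℂ)
    (h : ∀ ρ : Matrix (Fin n) (Fin n) ℂ, IsState ρ → (M * ρ).trace = 0) : M = 0 := by
  have key : ∀ x : Fin n → ℂ, star x ⬝ᵥ (M *ᵥ x) = 0 := by
    intro x
    by_cases hx : x = 0
    · simp [hx]
    have hne : star x ⬝ᵥ x ≠ 0 := fun h0 => hx (dotProduct_star_self_eq_zero.mp h0)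
    have hpos : 0 ≤ (star x ⬝ᵥ x)⁻¹ := inv_nonneg.mpr (dotProduct_star_self_nonneg x)
    have hs := h ((star x ⬝ᵥ x)⁻¹ • Matrix.vecMulVec x (star x))
      ⟨(Matrix.posSemidef_vecMulVec_self_star x).smul hpos, by
        rw [Matrix.trace_smul, Matrix.trace_vecMulVec, dotProduct_comm x, smul_eq_mul,
          inv_mul_cancel₀ hne]⟩
    rw [Matrix.mul_smul, Matrix.trace_smul, Matrix.mul_vecMulVec, Matrix.trace_vecMulVec,
      smul_eq_mul, mul_eq_zero, dotProduct_comm (M *ᵥ x)] at hs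
    exact hs.resolve_left (inv_ne_zero hne)
  have hT : Matrix.toEuclideanLin M = 0 := by
    refine (inner_map_self_eq_zero _).mp fun x => ?_
    rw [← inner_conj_symm, EuclideanSpace.inner_eq_star_dotProduct, dotProduct_comm]
    simpa using key x.ofLp
  simpa using hT

/-- Theorem 3.1, (i) ⇔ (v): for an operation `I(ρ) = ∑ i, K i * ρ * (K i)ᴴ` measuring
`a = ∑ i, (K i)ᴴ * K i`, `a` is repeatable with respect to `I` iff
`tr(I(I(ρ))) = tr(I(ρ))` for every state `ρ`. -/
theorem repeatable_iff_trace {n m : ℕ}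
    (a : Matrix (Fin n) (Fin n) ℂ) (ha : IsEffect a)
    (K : Fin m → Matrix (Fin n) (Fin n) ℂ)
    (hK : ∑ i, (K i)ᴴ * K i = a) :
    (∑ i, (K i)ᴴ * a * K i = a) ↔
      (∀ ρ : Matrix (Fin n) (Fin n) ℂ, IsState ρ →
        (∑ i, K i * (∑ j, K j * ρ * (K j)ᴴ) * (K i)ᴴ).trace
          = (∑ i, K i * ρ * (K i)ᴴ).trace) := by
  have h1 : ∀ σ : Matrix (Fin n) (Fin n) ℂ,
      (∑ i, K i * σ * (K i)ᴴ).trace = (a * σ).trace := by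
    intro σ
    simpa [hK] using trace_kraus K 1 σ
  simp only [h1, trace_kraus]
  constructor
  · intro h ρ _
    rw [h]
  · intro h
    refine sub_eq_zero.mp (eq_zero_of_trace_mul_state _ fun ρ hρ => ?_)
    rw [Matrix.sub_mul, Matrix.trace_sub, h ρ hρ, sub_self]
end

section
/- Let a be an effect on a finite-dimensional complex Hilbert space H. Then there exists a finite family of operators K_1, …, K_n with ∑_i K_i* K_i = a and ∑_i K_i* a K_i = a (that is, a is repeatable with respect to some operation measuring a) if and only if a = 0 or a has eigenvalue 1 (there is a nonzero vector ψ with aψ = ψ). -/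
/-!
If `∑ Kᵢ* Kᵢ = a = ∑ Kᵢ* a Kᵢ`, then `∑ Kᵢ* (1 - a) Kᵢ = 0` is a sum of positive semidefinite
terms, so `⟪Kᵢ x, (1 - a) Kᵢ x⟫ = 0` for all `i` and `x`, and hence `a Kᵢ x = Kᵢ x`. Either every
`Kᵢ` vanishes and `a = 0`, or some nonzero `Kᵢ x` is a fixed vector of `a`.

Conversely, given a fixed vector `ψ` of norm one, write `a = ∑ vᵢ vᵢ*`. The rank-one
operators `Kᵢ = ψ vᵢ*` satisfy `Kᵢ* Kᵢ = vᵢ vᵢ*`, hence `∑ Kᵢ* Kᵢ = a`, and `a Kᵢ = Kᵢ` gives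
the second identity.
-/

open scoped ComplexOrder Matrix

/-- The ranges of the Kraus operators of a repeatable effect consist of fixed vectors. -/
theorem mul_eq_of_repeatable {n m : ℕ} {a : Matrix (Fin n) (Fin n) ℂ}
    {K : Fin m → Matrix (Fin n) (Fin n) ℂ} (ha : (1 - a).PosSemidef)
    (h1 : ∑ i, (K i)ᴴ * K i = a) (h2 : ∑ i, (K i)ᴴ * a * K i = a) (i : Fin m) :
    a * K i = K i := by
  have hsum : ∑ i, (K i)ᴴ * (1 - a) * K i = 0 := by
    simp only [mul_sub, sub_mul, mul_one, Finset.sum_sub_distrib, h1, h2, sub_self]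
  have hquad (j : Fin m) (x : Fin n → ℂ) :
      star x ⬝ᵥ ((K j)ᴴ * (1 - a) * K j).mulVec x
        = star ((K j).mulVec x) ⬝ᵥ (1 - a).mulVec ((K j).mulVec x) := by
    rw [Matrix.star_mulVec, ← Matrix.dotProduct_mulVec, Matrix.mulVec_mulVec,
      Matrix.mulVec_mulVec, Matrix.mul_assoc]
  refine Matrix.ext_of_mulVec_single fun k => ?_
  generalize (Pi.single k 1 : Fin n → ℂ) = x
  have hs : ∑ j, star ((K j).mulVec x) ⬝ᵥ (1 - a).mulVec ((K j).mulVec x) = 0 := by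
    simp_rw [← hquad, ← dotProduct_sum, ← Matrix.sum_mulVec, hsum, Matrix.zero_mulVec,
      dotProduct_zero]
  have hz := (Finset.sum_eq_zero_iff_of_nonneg
    fun j _ => ha.dotProduct_mulVec_nonneg ((K j).mulVec x)).1 hs i (Finset.mem_univ i)
  rw [ha.dotProduct_mulVec_zero_iff, Matrix.sub_mulVec, Matrix.one_mulVec, sub_eq_zero,
    Matrix.mulVec_mulVec] at hz
  exact hz.symm

/-- Theorem 3.2: an effect `a` is repeatable (with respect to some operation measuring it)
iff `a = 0` or `a` has eigenvalue `1`. -/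
theorem repeatable_iff_eigenvalue_one {n : ℕ}
    (a : Matrix (Fin n) (Fin n) ℂ) (ha : IsEffect a) :
    (∃ (m : ℕ) (K : Fin m → Matrix (Fin n) (Fin n) ℂ),
        ∑ i, (K i)ᴴ * K i = a ∧ ∑ i, (K i)ᴴ * a * K i = a) ↔
      (a = 0 ∨ ∃ ψ : Fin n → ℂ, ψ ≠ 0 ∧ a.mulVec ψ = ψ) := by
  constructor
  · rintro ⟨m, K, h1, h2⟩
    by_cases hK : ∀ i, K i = 0
    · left
      rw [← h1]
      simp [hK]
    · right
      push Not at hK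
      obtain ⟨i, hi⟩ := hK
      obtain ⟨x, hx⟩ : ∃ x, (K i).mulVec x ≠ 0 := by
        by_contra! h
        exact hi (Matrix.ext_of_mulVec_single fun k => by rw [h, Matrix.zero_mulVec])
      exact ⟨_, hx, by rw [Matrix.mulVec_mulVec, mul_eq_of_repeatable ha.2 h1 h2 i]⟩
  · rintro (rfl | ⟨ψ, hψ, haψ⟩)
    · exact ⟨0, 0, by simp⟩
    · obtain ⟨m, v, hv⟩ := Matrix.posSemidef_iff_eq_sum_vecMulVec.1 ha.1
      obtain ⟨φ, hφ, haφ⟩ : ∃ φ : Fin n → ℂ, star φ ⬝ᵥ φ = 1 ∧ a.mulVec φ = φ := by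
        have hpos : 0 < star ψ ⬝ᵥ ψ := Matrix.dotProduct_star_self_pos_iff.2 hψ
        obtain ⟨r, hr0, hr⟩ : ∃ r : ℝ, 0 < r ∧ star ψ ⬝ᵥ ψ = r :=
          ⟨(star ψ ⬝ᵥ ψ).re, (Complex.pos_iff.1 hpos).1,
            Complex.ext rfl (by simpa using (Complex.pos_iff.1 hpos).2.symm)⟩
        refine ⟨(((√r)⁻¹ : ℝ) : ℂ) • ψ, ?_, by rw [Matrix.mulVec_smul, haψ]⟩
        have hs : (√r)⁻¹ * ((√r)⁻¹ * r) = 1 := by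
          have := Real.mul_self_sqrt hr0.le
          have := (Real.sqrt_pos.2 hr0).ne'
          field_simp
          nlinarith
        rw [star_smul, smul_dotProduct, dotProduct_smul, hr]
        simp only [smul_eq_mul, RCLike.star_def, Complex.conj_ofReal]
        exact_mod_cast hs
      have h1 : ∑ i, (Matrix.vecMulVec φ (star (v i)))ᴴ * Matrix.vecMulVec φ (star (v i)) = a := by
        simp only [Matrix.conjTranspose_vecMulVec, Matrix.vecMulVec_mul_vecMulVec, hφ, star_star,
          one_smul, hv]
      refine ⟨m, fun i => Matrix.vecMulVec φ (star (v i)), h1, ?_⟩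
      simpa only [Matrix.mul_vecMulVec, ← Matrix.mulVec_mulVec, haφ] using h1
end

section
/- Let a be an effect on a finite-dimensional complex Hilbert space H. Then there exists an operator K with K*K = a and K*aK = a (that is, a is repeatable with respect to some Kraus operation measuring a) if and only if a is sharp, i.e., a² = a. -/
/-!
If `K` measures `a` repeatably, then `Kᴴ * (1 - a) * K = 0`, so `a * K = K` by positivity of
`1 - a`. Put `b = K * Kᴴ`. Then `a * b = b = b * a`, while `a = Kᴴ * K` gives `tr b = tr a` and
`tr b² = tr a²`. Hence `tr (a - b)² = 2 (tr a² - tr a) = -2 tr (K * (1 - a) * Kᴴ) ≤ 0`, which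
forces `a = b`, and `a * a = a * b = b = a`. Conversely a sharp `a` is measured repeatably by
`K = a`.
-/

open scoped ComplexOrder Matrix

open scoped MatrixOrder in
lemma exists_eq_conjTranspose_mul_self {n : ℕ} {A : Matrix (Fin n) (Fin n) ℂ}
    (hA : A.PosSemidef) : ∃ B : Matrix (Fin n) (Fin n) ℂ, A = Bᴴ * B :=
  CStarAlgebra.nonneg_iff_eq_star_mul_self.mp hA.nonneg

/-- Theorem 3.3(i): an effect `a` is repeatable with respect to some Kraus operation
measuring it iff `a` is sharp, i.e. `a² = a`. -/
theorem kraus_repeatable_iff_sharp {n : ℕ}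
    (a : Matrix (Fin n) (Fin n) ℂ) (ha : IsEffect a) :
    (∃ K : Matrix (Fin n) (Fin n) ℂ, Kᴴ * K = a ∧ Kᴴ * a * K = a) ↔ a * a = a := by
  constructor
  · rintro ⟨K, hK, hKa⟩
    -- Repeatability gives `Kᴴ * (1 - a) * K = 0`; as `1 - a = Bᴴ * B`, this forces `a * K = K`.
    have haK : a * K = K := by
      obtain ⟨B, hB⟩ : ∃ B : Matrix (Fin n) (Fin n) ℂ, 1 - a = Bᴴ * B :=
        exists_eq_conjTranspose_mul_self ha.2
      have h0 : (B * K)ᴴ * (B * K) = 0 := by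
        calc (B * K)ᴴ * (B * K) = Kᴴ * (Bᴴ * B) * K := by
              rw [Matrix.conjTranspose_mul]; noncomm_ring
          _ = Kᴴ * K - Kᴴ * a * K := by rw [← hB]; noncomm_ring
          _ = 0 := by rw [hK, hKa, sub_self]
      have hBK : B * K = 0 := Matrix.conjTranspose_mul_self_eq_zero.mp h0
      have h1 : (1 - a) * K = 0 := by rw [hB, Matrix.mul_assoc, hBK, Matrix.mul_zero]
      rw [Matrix.sub_mul, Matrix.one_mul, sub_eq_zero] at h1
      exact h1.symm
    have haH : aᴴ = a := ha.1.isHermitian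
    have hKa' : Kᴴ * a = Kᴴ := by
      simpa [Matrix.conjTranspose_mul, haH] using congrArg Matrix.conjTranspose haK
    have hdiff : (a - K * Kᴴ)ᴴ * (a - K * Kᴴ) =
        a * a - K * Kᴴ - K * Kᴴ + K * a * Kᴴ := by
      have h1 : a * (K * Kᴴ) = K * Kᴴ := by rw [← Matrix.mul_assoc, haK]
      have h2 : K * Kᴴ * a = K * Kᴴ := by rw [Matrix.mul_assoc, hKa']
      have h3 : K * Kᴴ * (K * Kᴴ) = K * a * Kᴴ := by rw [← hK]; noncomm_ring
      rw [Matrix.conjTranspose_sub, haH, Matrix.conjTranspose_mul,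
        Matrix.conjTranspose_conjTranspose, Matrix.sub_mul, Matrix.mul_sub, Matrix.mul_sub,
        h1, h2, h3]
      abel
    have htr : (K * a * Kᴴ).trace = (a * a).trace := by
      rw [Matrix.trace_mul_comm, ← Matrix.mul_assoc, hK]
    have htr' : (K * Kᴴ).trace = a.trace := by rw [Matrix.trace_mul_comm, hK]
    have hle : 0 ≤ (K * (1 - a) * Kᴴ).trace :=
      (ha.2.mul_mul_conjTranspose_same K).trace_nonneg
    have hle' : (K * (1 - a) * Kᴴ).trace = a.trace - (a * a).trace := by
      rw [Matrix.mul_sub, Matrix.sub_mul, Matrix.mul_one, Matrix.trace_sub, htr, htr']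
    have hge : 0 ≤ ((a - K * Kᴴ)ᴴ * (a - K * Kᴴ)).trace :=
      (Matrix.posSemidef_conjTranspose_mul_self _).trace_nonneg
    have hsum : ((a - K * Kᴴ)ᴴ * (a - K * Kᴴ)).trace
        = -(2 * (K * (1 - a) * Kᴴ).trace) := by
      rw [hdiff, hle']
      simp only [Matrix.trace_add, Matrix.trace_sub, htr, htr']
      ring
    have hzero : ((a - K * Kᴴ)ᴴ * (a - K * Kᴴ)).trace = 0 := by
      refine le_antisymm ?_ hge
      rw [hsum]
      exact neg_nonpos.mpr (mul_nonneg zero_le_two hle)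
    have hab : a = K * Kᴴ :=
      sub_eq_zero.mp (Matrix.trace_conjTranspose_mul_self_eq_zero_iff.mp hzero)
    calc a * a = a * (K * Kᴴ) := congrArg (a * ·) hab
      _ = K * Kᴴ := by rw [← Matrix.mul_assoc, haK]
      _ = a := hab.symm
  · intro h
    have haH : aᴴ = a := ha.1.isHermitian
    exact ⟨a, by rw [haH, h], by rw [haH, h, h]⟩
end

section
/- Let a be an effect and α a state on a finite-dimensional complex Hilbert space H. Then tr(αa)·a = a (that is, a is repeatable with respect to the Holevo operation H^{(a,α)}) if and only if a = 0 or aψ = ψ for every eigenvector ψ of α corresponding to a nonzero eigenvalue (equivalently, a = 0 or tr(αa) = 1). -/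
/-!
Both sides of the equivalence say, for `a ≠ 0`, that `a * α = α`.

If `tr(αa) • a = a` and `a ≠ 0`, then `tr(αa) = 1 = tr α`, so `tr(α(1 - a)) = 0`. Two positive
semidefinite matrices whose product has trace zero have product zero
(`mul_eq_zero_of_trace_mul_eq_zero`), hence `(1 - a)α = 0`, and `a` fixes every eigenvector of `α`
with nonzero eigenvalue. Conversely, if `a` fixes those eigenvectors, then `a * α` and `α` agree on
an eigenbasis of `α` (`mul_eq_self_of_fixes_eigenvectors`), and `tr(αa) = tr(aα) = tr α = 1`.
-/

open scoped ComplexOrder Matrix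

open scoped MatrixOrder Matrix.Norms.L2Operator in
/-- With `A = XᴴX` and `B = YᴴY`, the trace of `AB` is that of `(XYᴴ)ᴴ(XYᴴ)`, so it vanishes only if
`XYᴴ = 0`. -/
theorem mul_eq_zero_of_trace_mul_eq_zero {n : ℕ} {A B : Matrix (Fin n) (Fin n) ℂ}
    (hA : A.PosSemidef) (hB : B.PosSemidef) (h : (A * B).trace = 0) : A * B = 0 := by
  obtain ⟨X, rfl⟩ := CStarAlgebra.nonneg_iff_eq_star_mul_self.mp hA.nonneg
  obtain ⟨Y, rfl⟩ := CStarAlgebra.nonneg_iff_eq_star_mul_self.mp hB.nonneg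
  simp only [Matrix.star_eq_conjTranspose] at *
  have hXY : X * Yᴴ = 0 := by
    rw [← Matrix.trace_conjTranspose_mul_self_eq_zero_iff, ← h, Matrix.conjTranspose_mul,
      Matrix.conjTranspose_conjTranspose, Matrix.mul_assoc, Matrix.trace_mul_comm]
    simp only [Matrix.mul_assoc]
  calc Xᴴ * X * (Yᴴ * Y) = Xᴴ * (X * Yᴴ) * Y := by simp only [Matrix.mul_assoc]
    _ = 0 := by rw [hXY, Matrix.mul_zero, Matrix.zero_mul]

theorem mul_eq_self_of_fixes_eigenvectors {n : ℕ} {a α : Matrix (Fin n) (Fin n) ℂ}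
    (hα : α.IsHermitian)
    (h : ∀ (ψ : Fin n → ℂ) (μ : ℂ), ψ ≠ 0 → μ ≠ 0 → α.mulVec ψ = μ • ψ → a.mulVec ψ = ψ) :
    a * α = α := by
  have key : ∀ j, (a * α).mulVec (hα.eigenvectorBasis j).ofLp =
      α.mulVec (hα.eigenvectorBasis j).ofLp := by
    intro j
    have hj : α.mulVec (hα.eigenvectorBasis j).ofLp =
        (hα.eigenvalues j : ℂ) • (hα.eigenvectorBasis j).ofLp := by
      simpa using hα.mulVec_eigenvectorBasis j
    rw [← Matrix.mulVec_mulVec, hj, Matrix.mulVec_smul]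
    by_cases hμ : (hα.eigenvalues j : ℂ) = 0
    · simp [hμ]
    · rw [h _ _ _ hμ hj]
      intro h0
      exact hα.eigenvectorBasis.orthonormal.ne_zero j (by ext i; exact congrFun h0 i)
  apply Matrix.toEuclideanLin.injective
  refine hα.eigenvectorBasis.toBasis.ext fun j => ?_
  rw [OrthonormalBasis.coe_toBasis]
  ext i
  exact congrFun (key j) i

/-- Theorem 3.3(ii): an effect `a` is repeatable with respect to the Holevo operation
`H^{(a,α)}` (i.e. `tr(αa)·a = a`) iff `a = 0` or `aψ = ψ` for every eigenvector `ψ`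
of `α` corresponding to a nonzero eigenvalue. -/
theorem holevo_repeatable_iff {n : ℕ}
    (a α : Matrix (Fin n) (Fin n) ℂ) (ha : IsEffect a) (hα : IsState α) :
    (α * a).trace • a = a ↔
      (a = 0 ∨ ∀ (ψ : Fin n → ℂ) (μ : ℂ), ψ ≠ 0 → μ ≠ 0 → α.mulVec ψ = μ • ψ →
        a.mulVec ψ = ψ) := by
  constructor
  · intro h
    refine or_iff_not_imp_left.mpr fun ha0 ψ μ _ hμ hψ => ?_
    have htr : (α * a).trace = 1 := smul_left_injective ℂ ha0 (by simpa using h)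
    have hz : α * (1 - a) = 0 := by
      apply mul_eq_zero_of_trace_mul_eq_zero hα.1 ha.2
      rw [Matrix.mul_sub, Matrix.mul_one, Matrix.trace_sub, hα.2, htr, sub_self]
    -- Taking adjoints moves `1 - a` to the left of `α`.
    have hz' : (1 - a) * α = 0 := by
      have := congrArg Matrix.conjTranspose hz
      rwa [Matrix.conjTranspose_mul, ha.2.isHermitian.eq, hα.1.isHermitian.eq,
        Matrix.conjTranspose_zero] at this
    have hfix : a * α = α := by
      rw [Matrix.sub_mul, Matrix.one_mul, sub_eq_zero] at hz'
      exact hz'.symm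
    have h1 : μ • a.mulVec ψ = μ • ψ := by
      rw [← Matrix.mulVec_smul, ← hψ, Matrix.mulVec_mulVec, hfix]
    exact smul_right_injective _ hμ h1
  · rintro (rfl | h)
    · simp
    · rw [Matrix.trace_mul_comm, mul_eq_self_of_fixes_eigenvectors hα.1.isHermitian h, hα.2,
        one_smul]
end
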